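/- Let d ≥ 1 be an integer and s > 7d/2. Then there exists a constant C = C(s, d) > 0 such that for every h : ℤ^d → [0, ∞) with ‖h‖_{ℓ²_s} < ∞ one has Σ_{n ∈ ℤ^d} ( Σ_{m ∈ ℤ^d} h(n − m)^{1/2} h(m)^{1/2} )^{1/2} ≤ C ‖h‖_{ℓ²_s}^{1/2}. In particular, the function n ↦ ((h^{1/2} * h^{1/2})(n))^{1/2} belongs to ℓ¹(ℤ^d). -/

import Mathlib

/-- Euclidean norm of a lattice point `n ∈ ℤ^d`, viewed as a vector in `ℝ^d`. -/
noncomputable def latNorm {d : ℕ} (n : Fin d → ℤ) : ℝ :=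
  Real.sqrt (∑ i, ((n i : ℝ)) ^ 2)

theorem latNorm_nonneg' {d : ℕ} (n : Fin d → ℤ) : 0 ≤ latNorm n := Real.sqrt_nonneg _

theorem latNorm_eq_norm {d : ℕ} (n : Fin d → ℤ) :
    latNorm n = ‖(WithLp.toLp 2 (fun i => (n i : ℝ)) : EuclideanSpace ℝ (Fin d))‖ := by
  rw [EuclideanSpace.norm_eq]
  simp [latNorm]

theorem latNorm_add_le {d : ℕ} (n m : Fin d → ℤ) : latNorm (n + m) ≤ latNorm n + latNorm m := by
  simp only [latNorm_eq_norm]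
  refine le_trans (le_of_eq ?_) (norm_add_le _ _)
  congr 1
  ext i
  simp

theorem weight_summable (d : ℕ) (r : ℝ) (hr : (d : ℝ) < r) :
    Summable fun n : Fin d → ℤ => (1 + latNorm n) ^ (-r) := by
  let b := (EuclideanSpace.basisFun (Fin d) ℝ).toBasis
  let L := Submodule.span ℤ (Set.range b)
  have hrank : Module.finrank ℤ L = d := by
    rw [ZLattice.rank ℝ L]; simp
  have hs := ZLattice.summable_norm_rpow L (-r) (by rw [hrank]; linarith)
  have hmem : ∀ n : Fin d → ℤ,
      (WithLp.toLp 2 (fun i => (n i : ℝ)) : EuclideanSpace ℝ (Fin d)) ∈ L := by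
    intro n
    rw [Module.Basis.mem_span_iff_repr_mem]
    intro i
    exact ⟨n i, by simp [b]⟩
  let φ : (Fin d → ℤ) → L := fun n => ⟨_, hmem n⟩
  have hφ : Function.Injective φ := by
    intro n m h
    have h1 := congrArg (fun x : L => (x : EuclideanSpace ℝ (Fin d))) h
    funext i
    have h2 := congrArg (fun x : EuclideanSpace ℝ (Fin d) => x i) h1
    simpa [φ] using h2
  have hs2 := hs.comp_injective hφ
  refine Summable.of_norm_bounded_eventually hs2 ?_
  refine Set.Finite.subset (Set.finite_singleton (0 : Fin d → ℤ)) ?_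
  intro n hn
  by_contra hne
  apply hn
  have hnorm : ‖φ n‖ = latNorm n := (latNorm_eq_norm n).symm
  have hpos : 0 < latNorm n := by
    rw [← hnorm, norm_pos_iff]
    intro h0
    apply hne
    have : φ n = φ 0 := by rw [h0]; ext i; simp [φ]
    exact hφ this
  change ‖(1 + latNorm n) ^ (-r)‖ ≤ ‖φ n‖ ^ (-r)
  rw [hnorm]
  rw [Real.norm_of_nonneg (by positivity)]
  exact Real.rpow_le_rpow_of_nonpos hpos (by linarith) (by have : (0:ℝ) ≤ d := by positivity
                                                           linarith)

theorem weight_submul {d : ℕ} (n m : Fin d → ℤ) :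
    1 + latNorm n ≤ (1 + latNorm (n - m)) * (1 + latNorm m) := by
  have h := latNorm_add_le (n - m) m
  rw [sub_add_cancel] at h
  nlinarith [mul_nonneg (latNorm_nonneg' (n - m)) (latNorm_nonneg' m)]

theorem sqrt_sqrt_pow4 {x : ℝ} (hx : 0 ≤ x) : x ^ ((1 : ℝ) / 4) = Real.sqrt (Real.sqrt x) := by
  rw [Real.sqrt_eq_rpow, Real.sqrt_eq_rpow, ← Real.rpow_mul hx]; norm_num

/-- Hölder step. -/
theorem step_one (d : ℕ) (s b : ℝ) (hb : (d : ℝ) < (s / 2 - b) * (4 / 3))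
    (h : (Fin d → ℤ) → ℝ) (hh : ∀ n, 0 ≤ h n)
    (hS : Summable fun n : Fin d → ℤ => (1 + latNorm n) ^ (2 * s) * h n ^ 2) :
    (Summable fun n : Fin d → ℤ => (1 + latNorm n) ^ b * Real.sqrt (h n)) ∧
    ∑' n : Fin d → ℤ, (1 + latNorm n) ^ b * Real.sqrt (h n) ≤
      (∑' n : Fin d → ℤ, (1 + latNorm n) ^ (-((s / 2 - b) * (4 / 3)))) ^ ((3 : ℝ) / 4) *
      Real.sqrt (Real.sqrt (∑' n : Fin d → ℤ, (1 + latNorm n) ^ (2 * s) * h n ^ 2)) := by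
  have hW : ∀ n : Fin d → ℤ, 0 < 1 + latNorm n := fun n => by
    have := latNorm_nonneg' n; linarith
  have e1 : ∀ n : Fin d → ℤ, ((1 + latNorm n) ^ (b - s / 2)) ^ ((4 : ℝ) / 3) =
      (1 + latNorm n) ^ (-((s / 2 - b) * (4 / 3))) := fun n => by
    rw [← Real.rpow_mul (hW n).le]; congr 1; ring
  have e2 : ∀ n : Fin d → ℤ, ((1 + latNorm n) ^ (s / 2) * Real.sqrt (h n)) ^ (4 : ℝ) =
      (1 + latNorm n) ^ (2 * s) * h n ^ 2 := fun n => by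
    rw [Real.mul_rpow (Real.rpow_nonneg (hW n).le _) (Real.sqrt_nonneg _),
      ← Real.rpow_mul (hW n).le]
    congr 1
    · congr 1; ring
    · rw [show (4 : ℝ) = ((4 : ℕ) : ℝ) by norm_num, Real.rpow_natCast,
        show (4 : ℕ) = 2 * 2 by norm_num, pow_mul, Real.sq_sqrt (hh n)]
  have e3 : ∀ n : Fin d → ℤ, (1 + latNorm n) ^ (b - s / 2) *
      ((1 + latNorm n) ^ (s / 2) * Real.sqrt (h n)) = (1 + latNorm n) ^ b * Real.sqrt (h n) :=
    fun n => by
      rw [← mul_assoc, ← Real.rpow_add (hW n)]; congr 2; ring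
  have key := Real.summable_and_inner_le_Lp_mul_Lq_tsum_of_nonneg
    (p := 4 / 3) (q := 4) (f := fun n : Fin d → ℤ => (1 + latNorm n) ^ (b - s / 2))
    (g := fun n : Fin d → ℤ => (1 + latNorm n) ^ (s / 2) * Real.sqrt (h n))
    (by rw [Real.holderConjugate_iff]; norm_num)
    (fun n => Real.rpow_nonneg (hW n).le _)
    (fun n => mul_nonneg (Real.rpow_nonneg (hW n).le _) (Real.sqrt_nonneg _))
    (by simp only [e1]; exact weight_summable d _ hb)
    (by simp only [e2]; exact hS)
  simp only [e1, e2, e3] at key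
  refine ⟨key.1, key.2.trans (le_of_eq ?_)⟩
  rw [sqrt_sqrt_pow4 (tsum_nonneg fun n => mul_nonneg (Real.rpow_nonneg (hW n).le _) (sq_nonneg _))]
  norm_num

/-- Convolution of summable nonnegative functions. -/
theorem conv_summable {G : Type*} [AddCommGroup G] (g : G → ℝ) (hg : ∀ n, 0 ≤ g n) (hs : Summable g) :
    (∀ n, Summable fun m => g (n - m) * g m) ∧ (Summable fun n => ∑' m, g (n - m) * g m) ∧
    ∑' n, ∑' m, g (n - m) * g m = (∑' n, g n) ^ 2 := by
  let e : G × G ≃ G × G :=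
    { toFun := fun p => (p.1 - p.2, p.2)
      invFun := fun p => (p.1 + p.2, p.2)
      left_inv := fun p => by simp
      right_inv := fun p => by simp }
  have h1 := hs.mul_of_nonneg hs hg hg
  have h2 : Summable fun p : G × G => g (p.1 - p.2) * g p.2 :=
    (e.summable_iff (f := fun p : G × G => g p.1 * g p.2)).2 h1
  refine ⟨fun n => h2.prod_factor n, h2.prod, ?_⟩
  rw [← h2.tsum_prod, sq, hs.tsum_mul_tsum hs h1]
  have h3 : ∑' p, g (e p).1 * g (e p).2 = ∑' p : G × G, g p.1 * g p.2 :=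
    e.tsum_eq (fun p : G × G => g p.1 * g p.2)
  exact h3

/-- For `d ≥ 1` and `s > 7d/2` there is `C = C(s, d) > 0` such that for every
`h : ℤ^d → [0, ∞)` with finite `ℓ²_s`-norm,
`∑_n (∑_m h(n−m)^{1/2} h(m)^{1/2})^{1/2} ≤ C ‖h‖_{ℓ²_s}^{1/2}`; in particular
`n ↦ ((h^{1/2} * h^{1/2})(n))^{1/2}` belongs to `ℓ¹(ℤ^d)`. -/
theorem stmt4 (d : ℕ) (hd : 1 ≤ d) (s : ℝ) (hs : 7 * (d : ℝ) / 2 < s) :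
    ∃ C : ℝ, 0 < C ∧ ∀ h : (Fin d → ℤ) → ℝ, (∀ n, 0 ≤ h n) →
      (Summable fun n : Fin d → ℤ => (1 + latNorm n) ^ (2 * s) * h n ^ 2) →
      (∀ n : Fin d → ℤ,
        Summable fun m : Fin d → ℤ => Real.sqrt (h (n - m)) * Real.sqrt (h m)) ∧
      (Summable fun n : Fin d → ℤ =>
        Real.sqrt (∑' m : Fin d → ℤ, Real.sqrt (h (n - m)) * Real.sqrt (h m))) ∧
      (∑' n : Fin d → ℤ,
          Real.sqrt (∑' m : Fin d → ℤ, Real.sqrt (h (n - m)) * Real.sqrt (h m)))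
        ≤ C * Real.sqrt
            (Real.sqrt (∑' n : Fin d → ℤ, (1 + latNorm n) ^ (2 * s) * h n ^ 2)) := by
  have hd0 : (1 : ℝ) ≤ d := by exact_mod_cast hd
  obtain ⟨b, hb1, hb2⟩ : ∃ b : ℝ, (d : ℝ) < b ∧ (d : ℝ) < (s / 2 - b) * (4 / 3) :=
    ⟨(d + (s / 2 - 3 * d / 4)) / 2, by linarith, by linarith⟩
  have hW : ∀ n : Fin d → ℤ, 1 ≤ 1 + latNorm n := fun n => by
    have := latNorm_nonneg' n; linarith
  have hW0 : ∀ n : Fin d → ℤ, 0 < 1 + latNorm n := fun n => lt_of_lt_of_le one_pos (hW n)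
  have hA0 : 0 ≤ ∑' n : Fin d → ℤ, (1 + latNorm n) ^ (-b) :=
    tsum_nonneg fun n => Real.rpow_nonneg (hW0 n).le _
  have hB0 : 0 ≤ (∑' n : Fin d → ℤ,
      (1 + latNorm n) ^ (-((s / 2 - b) * (4 / 3)))) ^ ((3 : ℝ) / 4) :=
    Real.rpow_nonneg (tsum_nonneg fun n => Real.rpow_nonneg (hW0 n).le _) _
  have hAs := weight_summable d b hb1
  have h1 := step_one d s b hb2
  set A := ∑' n : Fin d → ℤ, (1 + latNorm n) ^ (-b) with hA
  set B := (∑' n : Fin d → ℤ,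
      (1 + latNorm n) ^ (-((s / 2 - b) * (4 / 3)))) ^ ((3 : ℝ) / 4) with hB
  refine ⟨Real.sqrt A * B + 1, by positivity, ?_⟩
  intro h hh hS
  obtain ⟨hg, hgle⟩ := h1 h hh hS
  have hg0 : ∀ n : Fin d → ℤ, 0 ≤ (1 + latNorm n) ^ b * Real.sqrt (h n) := fun n =>
    mul_nonneg (Real.rpow_nonneg (hW0 n).le _) (Real.sqrt_nonneg _)
  obtain ⟨hc1, hc2, hc3⟩ := conv_summable _ hg0 hg
  have hpt : ∀ n m : Fin d → ℤ,
      (1 + latNorm n) ^ b * (Real.sqrt (h (n - m)) * Real.sqrt (h m)) ≤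
      ((1 + latNorm (n - m)) ^ b * Real.sqrt (h (n - m))) *
        ((1 + latNorm m) ^ b * Real.sqrt (h m)) := by
    intro n m
    have : (1 + latNorm n) ^ b ≤ (1 + latNorm (n - m)) ^ b * (1 + latNorm m) ^ b := by
      rw [← Real.mul_rpow (hW0 _).le (hW0 _).le]
      exact Real.rpow_le_rpow (hW0 n).le (weight_submul n m) (by linarith)
    calc _ ≤ ((1 + latNorm (n - m)) ^ b * (1 + latNorm m) ^ b) *
          (Real.sqrt (h (n - m)) * Real.sqrt (h m)) :=
          mul_le_mul_of_nonneg_right this (mul_nonneg (Real.sqrt_nonneg _) (Real.sqrt_nonneg _))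
      _ = _ := by ring
  have hF0 : ∀ n m : Fin d → ℤ, 0 ≤ Real.sqrt (h (n - m)) * Real.sqrt (h m) := fun n m =>
    mul_nonneg (Real.sqrt_nonneg _) (Real.sqrt_nonneg _)
  have hFs : ∀ n : Fin d → ℤ,
      Summable fun m : Fin d → ℤ => Real.sqrt (h (n - m)) * Real.sqrt (h m) := by
    intro n
    refine Summable.of_nonneg_of_le (hF0 n) (fun m => ?_) (hc1 n)
    refine le_trans ?_ (hpt n m)
    exact le_mul_of_one_le_left (hF0 n m) (Real.one_le_rpow (hW n) (by linarith))
  refine ⟨hFs, ?_⟩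
  set F : (Fin d → ℤ) → ℝ := fun n => ∑' m : Fin d → ℤ, Real.sqrt (h (n - m)) * Real.sqrt (h m)
    with hF
  have hFn : ∀ n, 0 ≤ F n := fun n => tsum_nonneg (hF0 n)
  have hWF : ∀ n, 0 ≤ (1 + latNorm n) ^ b * F n := fun n =>
    mul_nonneg (Real.rpow_nonneg (hW0 n).le _) (hFn n)
  have hFle : ∀ n, (1 + latNorm n) ^ b * F n ≤
      ∑' m, ((1 + latNorm (n - m)) ^ b * Real.sqrt (h (n - m))) *
        ((1 + latNorm m) ^ b * Real.sqrt (h m)) := by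
    intro n
    rw [hF, ← tsum_mul_left]
    exact Summable.tsum_le_tsum (hpt n) ((hFs n).mul_left _) (hc1 n)
  have hFsum : Summable fun n => (1 + latNorm n) ^ b * F n :=
    Summable.of_nonneg_of_le hWF hFle hc2
  have hFtot := (Summable.tsum_le_tsum hFle hFsum hc2).trans hc3.le
  have e1 : ∀ n : Fin d → ℤ, ((1 + latNorm n) ^ (-b / 2)) ^ (2 : ℝ) = (1 + latNorm n) ^ (-b) :=
    fun n => by rw [← Real.rpow_mul (hW0 n).le]; congr 1; ring
  have e2 : ∀ n : Fin d → ℤ, (Real.sqrt ((1 + latNorm n) ^ b * F n)) ^ (2 : ℝ) =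
      (1 + latNorm n) ^ b * F n := fun n => by
    rw [Real.rpow_two, Real.sq_sqrt (hWF n)]
  have e3 : ∀ n : Fin d → ℤ, (1 + latNorm n) ^ (-b / 2) * Real.sqrt ((1 + latNorm n) ^ b * F n) =
      Real.sqrt (F n) := fun n => by
    rw [Real.sqrt_mul (Real.rpow_nonneg (hW0 n).le _), Real.sqrt_eq_rpow ((1 + latNorm n) ^ b),
      ← Real.rpow_mul (hW0 n).le, ← mul_assoc, ← Real.rpow_add (hW0 n),
      show -b / 2 + b * (1 / 2) = 0 by ring, Real.rpow_zero, one_mul]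
  have key := Real.summable_and_inner_le_Lp_mul_Lq_tsum_of_nonneg
    (p := 2) (q := 2) (f := fun n : Fin d → ℤ => (1 + latNorm n) ^ (-b / 2))
    (g := fun n : Fin d → ℤ => Real.sqrt ((1 + latNorm n) ^ b * F n))
    (by rw [Real.holderConjugate_iff]; norm_num)
    (fun n => Real.rpow_nonneg (hW0 n).le _)
    (fun n => Real.sqrt_nonneg _)
    (by simp only [e1]; exact hAs)
    (by simp only [e2]; exact hFsum)
  simp only [e1, e2, e3, ← Real.sqrt_eq_rpow] at key
  refine ⟨key.1, key.2.trans ?_⟩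
  have hG0 : 0 ≤ ∑' n : Fin d → ℤ, (1 + latNorm n) ^ b * Real.sqrt (h n) := tsum_nonneg hg0
  have hq : Real.sqrt (∑' n, (1 + latNorm n) ^ b * F n) ≤
      ∑' n : Fin d → ℤ, (1 + latNorm n) ^ b * Real.sqrt (h n) :=
    Real.sqrt_le_iff.2 ⟨hG0, hFtot⟩
  set N := Real.sqrt (Real.sqrt (∑' n : Fin d → ℤ, (1 + latNorm n) ^ (2 * s) * h n ^ 2)) with hN
  have hN0 : 0 ≤ N := Real.sqrt_nonneg _
  calc _ ≤ Real.sqrt A * (B * N) :=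
        mul_le_mul_of_nonneg_left (hq.trans hgle) (Real.sqrt_nonneg _)
    _ ≤ (Real.sqrt A * B + 1) * N := by nlinarith
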